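/- arXiv:2103.12627 — 2 statements merged into one kernel-verified Lean document; each statement's English description precedes it below -/
import Mathlib

section
/- Let Log x = max(1, log₂ x) and let Log^{(j)} denote its j-th iterate; let α = (log₂ 1073)/6. Then: (i) there exists a real constant β₂ such that for all integers n ≥ r ≥ 2, every hypergraph H with chromatic number n satisfies k(H; r) ≤ (2/α)·Log^{(r−1)}(rn) + 5r/2 + β₂; and (ii) for every integer r ≥ 2 there exists N such that for all n ≥ r with rn ≥ N, the complete hypergraph K_{rn}^{(r+1)} (which has chromatic number n) satisfies k(K_{rn}^{(r+1)}; r) > ⌊(1/3)·Log^{(r−1)}(rn) / Log^{(r)}(rn)⌋. -/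
/-!
**Upper bound.** Call a colouring of the increasing `r`-tuples of `[n]` proper for the shift graph
if `(x₁, …, x_r)` and `(x₂, …, x_{r+1})` always get different colours. For `r = 1` there is one
with `n` colours. A proper colouring with `k` colours yields one of rank `r + 1` with `2t` colours
whenever `k ≤ centralBinom t` (`shift_step`). As `t` can be taken with `2t ≤ (12/11) log₂ k + 8`,
rank `r` needs at most `(12/11) Log^{(r-1)} n + 14` colours (`exists_shift_colouring`), and
`12/11 ≤ 2/α` because `1073 < 2 ^ 11`.

Given a proper vertex colouring of `H` with `n` classes, an `r`-set that meets `r` classes is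
coloured by the shift colour of its set of classes. Any other `r`-set gets one of four further
colours: the parity of the number of classes it meets, and the parity of its number of vertices in
the lowest of them. Every `(r + 1)`-set that meets two classes then contains two `r`-subsets of
different colours (`exists_goodColouring`), so `k(H; r)` exceeds the shift number by at most four.

**Lower bound.** The Erdős–Rado argument with end-homogeneous sets gives a monochromatic
`(r + 1)`-set among any `P_r - 1` vertices, where `q = k + 2`, `P_1 = q` and
`P_{r+1} = q ^ (P_r ^ r)` (`exists_mono`). Here `P_r` is at most a tower of `r - 1` twos topped by
`(5/2) q log₂ q + r²` (`ramseyBound_le_tower`). If `k ≤ L / (3 Log L)` with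
`L = Log^{(r-1)}(rn)` large, the top is at most `L`, so `P_r ≤ rn` and `k` colours do not suffice.
-/

/-- The diagonal arrow relation `n → (s)_k^r`. -/
def Arrows (n r k s : ℕ) : Prop :=
  ∀ f : Finset ℕ → Fin k, ∃ i : Fin k, ∃ X ⊆ Finset.range n,
    X.card = s ∧ ∀ Y ⊆ X, Y.card = r → f Y = i

/-- The Ramsey number `r_k(s; r)`: the least `n` with `n → (s)_k^r`. -/
noncomputable def ramsey (k s r : ℕ) : ℕ := sInf {n | Arrows n r k s}

/-- A colouring `c` of the `r`-element subsets of the vertices of the hypergraph with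
edge set `E` leaves no hyperedge of size `≥ r + 1` monochromatic. -/
def GoodColouring {V : Type*} (E : Set (Finset V)) (r k : ℕ)
    (c : Finset V → Fin k) : Prop :=
  ∀ e ∈ E, r + 1 ≤ e.card → ¬ ∃ i : Fin k, ∀ Y ⊆ e, Y.card = r → c Y = i

/-- `k(H; r)`: the least number `k` of colours for which some colouring of the
`r`-element subsets of the vertices leaves no hyperedge of size `≥ r + 1`
monochromatic. -/
noncomputable def kNum {V : Type*} (E : Set (Finset V)) (r : ℕ) : ℕ :=
  sInf {k | ∃ c : Finset V → Fin k, GoodColouring E r k c}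

/-- The chromatic number of the hypergraph with edge set `E`: the least number of
colours in a vertex colouring in which no hyperedge of size `≥ 2` is monochromatic. -/
noncomputable def chromNum {V : Type*} (E : Set (Finset V)) : ℕ :=
  sInf {k | ∃ c : V → Fin k, ∀ e ∈ E, 2 ≤ e.card → ¬ ∃ i : Fin k, ∀ v ∈ e, c v = i}

/-- The edge set of the complete `r'`-uniform hypergraph `K_m^{(r')}` on `m` vertices. -/
def completeEdges (m r' : ℕ) : Set (Finset (Fin m)) := {e | e.card = r'}

/-- `Log x = max(1, log₂ x)`. -/
noncomputable def LogR (x : ℝ) : ℝ := max 1 (Real.logb 2 x)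

/-! ### Colouring the shift graph -/

/-- Passing from rank `j` to rank `j + 1`: old colours are encoded as `t`-subsets of `2 * t` points,
and a tuple gets a point in the code of its initial part but not in the code of its final part.
Such a point exists because the codes form an antichain. -/
theorem shift_step {α : Type*} (j k t : ℕ) (ht : 0 < t) (g : List α → Fin k)
    (hg : ∀ l : List α, l.Nodup → l.length = j + 1 → g l.dropLast ≠ g l.tail)
    (hk : k ≤ Nat.centralBinom t) :
    ∃ g' : List α → Fin (2 * t),
      ∀ l : List α, l.Nodup → l.length = j + 2 → g' l.dropLast ≠ g' l.tail := by
  classical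
  have hcard : Fintype.card (Fin k) ≤
      Fintype.card (Finset.powersetCard t (Finset.univ : Finset (Fin (2 * t)))) := by
    simpa [Nat.centralBinom] using hk
  obtain ⟨A⟩ := Function.Embedding.nonempty_of_card_le hcard
  have hA : ∀ a b : Fin k, a ≠ b → ∃ x, x ∈ (A a).1 ∧ x ∉ (A b).1 := by
    intro a b hab
    by_contra! hcon
    have ha := (Finset.mem_powersetCard.1 (A a).2).2
    have hb := (Finset.mem_powersetCard.1 (A b).2).2
    exact hab (A.injective (Subtype.ext
      (Finset.eq_of_subset_of_card_le (fun x hx => hcon x hx) (by rw [ha, hb]))))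
  have hch : ∀ l : List α, ∃ x : Fin (2 * t), g l.dropLast ≠ g l.tail →
      x ∈ (A (g l.dropLast)).1 ∧ x ∉ (A (g l.tail)).1 := by
    intro l
    by_cases h : g l.dropLast = g l.tail
    · exact ⟨⟨0, by omega⟩, fun h' => absurd h h'⟩
    · obtain ⟨x, hx⟩ := hA _ _ h
      exact ⟨x, fun _ => hx⟩
  choose g' hg' using hch
  refine ⟨g', fun l hl hlen heq => ?_⟩
  have h1 := (hg' l.dropLast (hg _ (hl.sublist (List.dropLast_sublist l)) (by simp [hlen]))).2
  have h2 := (hg' l.tail (hg _ (hl.sublist (List.tail_sublist l)) (by simp [hlen]))).1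
  rw [heq, List.tail_dropLast] at h1
  exact h1 h2

theorem exists_centralBinom_ge (k : ℕ) (hk : 1 ≤ k) :
    ∃ t : ℕ, 0 < t ∧ k ≤ Nat.centralBinom t ∧
      (2 * t : ℝ) ≤ 12 / 11 * Real.logb 2 k + 8 := by
  have hk' : (1 : ℝ) ≤ k := by exact_mod_cast hk
  set x := Real.logb 2 k with hx
  have hx0 : 0 ≤ x := Real.logb_nonneg (by norm_num) hk'
  have hkx : (2 : ℝ) ^ x = k := Real.rpow_logb (by norm_num) (by norm_num) (by linarith)
  set s := ⌈6 / 11 * x⌉₊ with hs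
  have hs1 : 6 / 11 * x ≤ s := Nat.le_ceil _
  have hs2 : (s : ℝ) < 6 / 11 * x + 1 := Nat.ceil_lt_add_one (by positivity)
  have ht : (2 * ((s + 3 : ℕ) : ℝ)) ≤ 12 / 11 * x + 8 := by push_cast; linarith
  refine ⟨s + 3, by omega, ?_, ht⟩
  have h4 : (4 : ℝ) ^ (s + 3) ≤ 2 * ((s + 3 : ℕ) : ℝ) * Nat.centralBinom (s + 3) := by
    exact_mod_cast Nat.four_pow_le_two_mul_self_mul_centralBinom (s + 3) (by omega)
  have h5 : 64 * ((k : ℝ) * (2 : ℝ) ^ (x / 11)) ≤ (4 : ℝ) ^ (s + 3) := by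
    rw [← hkx, ← Real.rpow_add (by norm_num), pow_add]
    have : (2 : ℝ) ^ (x + x / 11) ≤ 4 ^ s := by
      rw [show (4 : ℝ) = 2 ^ (2 : ℝ) by norm_num, ← Real.rpow_natCast, ← Real.rpow_mul (by norm_num)]
      exact Real.rpow_le_rpow_of_exponent_le (by norm_num) (by linarith)
    linarith
  have h6 : 1 + x / 22 ≤ (2 : ℝ) ^ (x / 11) := by
    rw [Real.rpow_def_of_pos (by norm_num)]
    have := Real.add_one_le_exp (Real.log 2 * (x / 11))
    have h2 := Real.log_two_gt_d9
    nlinarith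
  have h7 : (2 * ((s + 3 : ℕ) : ℝ)) * k ≤ 2 * ((s + 3 : ℕ) : ℝ) * Nat.centralBinom (s + 3) := by
    refine le_trans ?_ (h5.trans h4)
    have h8 : (2 * ((s + 3 : ℕ) : ℝ)) ≤ 64 * (2 : ℝ) ^ (x / 11) := by linarith
    calc _ ≤ 64 * (2 : ℝ) ^ (x / 11) * k := by gcongr
      _ = _ := by ring
  have h9 := le_of_mul_le_mul_left h7 (by positivity)
  exact_mod_cast h9

theorem one_le_iterate_LogR {x : ℝ} (hx : 1 ≤ x) (j : ℕ) : 1 ≤ LogR^[j] x := by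
  cases j with
  | zero => simpa
  | succ j => rw [Function.iterate_succ_apply']; exact le_max_left _ _

theorem LogR_mono {x y : ℝ} (hx : 0 < x) (h : x ≤ y) : LogR x ≤ LogR y :=
  max_le_max le_rfl (Real.logb_le_logb_of_le (by norm_num) hx h)

theorem iterate_LogR_mono {x y : ℝ} (hx : 1 ≤ x) (h : x ≤ y) (j : ℕ) :
    LogR^[j] x ≤ LogR^[j] y := by
  induction j with
  | zero => simpa
  | succ j ih =>
    rw [Function.iterate_succ_apply', Function.iterate_succ_apply']
    exact LogR_mono (by linarith [one_le_iterate_LogR hx j]) ih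

/-- The additive constant stays bounded along the recursion: since `12 / 11 + 14 < 16`, one step turns
it into `12 / 11 * 4 + 8 < 14`. -/
theorem exists_shift_colouring (n : ℕ) (hn : 1 ≤ n) (j : ℕ) :
    ∃ k : ℕ, 1 ≤ k ∧ (k : ℝ) ≤ 12 / 11 * LogR^[j] n + 14 ∧
      ∃ g : List (Fin n) → Fin k,
        ∀ l : List (Fin n), l.Nodup → l.length = j + 2 → g l.dropLast ≠ g l.tail := by
  have hn' : (1 : ℝ) ≤ n := by exact_mod_cast hn
  induction j with
  | zero =>
    refine ⟨n, hn, ?_, fun l => l.headD ⟨0, hn⟩, ?_⟩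
    · simp only [Function.iterate_zero, id]; linarith
    · intro l hl hlen
      match l, hlen with
      | [a, b], _ => simpa using hl
  | succ j ih =>
    obtain ⟨k, hk1, hkL, g, hg⟩ := ih
    obtain ⟨t, ht, hkt, htL⟩ := exists_centralBinom_ge k hk1
    obtain ⟨g', hg'⟩ := shift_step (j + 1) k t ht g hg hkt
    refine ⟨2 * t, by omega, ?_, g', hg'⟩
    rw [Function.iterate_succ_apply']
    have hL := one_le_iterate_LogR hn' j
    set L := LogR^[j] (n : ℝ)
    have h1 : Real.logb 2 k ≤ 4 + Real.logb 2 L := by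
      have h16 : Real.logb 2 16 = 4 := by
        rw [show (16 : ℝ) = 2 ^ (4 : ℝ) by norm_num]
        exact Real.logb_rpow (by norm_num) (by norm_num)
      rw [← h16, ← Real.logb_mul (by norm_num) (by linarith)]
      exact Real.logb_le_logb_of_le (by norm_num) (by exact_mod_cast hk1) (by linarith)
    have h2 : Real.logb 2 L ≤ LogR L := le_max_right _ _
    push_cast
    linarith

/-! ### Colouring the `r`-subsets of a hypergraph of chromatic number `n` -/

/-- The colour is a shift-graph colour when `Y` meets `r` vertex classes. Otherwise it consists of
the parity of the number of vertex classes met by `Y` and the parity of the number of vertices of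
`Y` in the lowest class met by `Y`. -/
theorem exists_goodColouring {V : Type*} (E : Set (Finset V)) (n r k : ℕ) (hr : 2 ≤ r)
    (c : V → Fin n) (hc : ∀ e ∈ E, 2 ≤ e.card → ¬ ∃ i : Fin n, ∀ v ∈ e, c v = i)
    (g : List (Fin n) → Fin k)
    (hg : ∀ l : List (Fin n), l.Nodup → l.length = r + 1 → g l.dropLast ≠ g l.tail) :
    ∃ c' : Finset V → Fin (k + 4), GoodColouring E r (k + 4) c' := by
  classical
  let lowCount : Finset V → ℕ := fun Y => (Y.filter fun v => ∀ w ∈ Y, c v ≤ c w).card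
  let col : Finset V → Fin k ⊕ (Fin 2 × Fin 2) := fun Y =>
    if (Y.image c).card = r then Sum.inl (g ((Y.image c).sort (· ≤ ·)))
    else Sum.inr (⟨(Y.image c).card % 2, Nat.mod_lt _ (by norm_num)⟩,
      ⟨lowCount Y % 2, Nat.mod_lt _ (by norm_num)⟩)
  have e4 : Fin k ⊕ (Fin 2 × Fin 2) ≃ Fin (k + 4) :=
    (Equiv.sumCongr (Equiv.refl _) finProdFinEquiv).trans finSumFinEquiv
  refine ⟨fun Y => e4 (col Y), ?_⟩
  rintro e he hcard ⟨i, hi⟩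
  have hcol : ∀ Y ⊆ e, Y.card = r → ∀ Y' ⊆ e, Y'.card = r → col Y = col Y' :=
    fun Y h1 h2 W h3 h4 => e4.injective ((hi Y h1 h2).trans (hi W h3 h4).symm)
  -- an `(r + 1)`-element subset of `e` that still meets two classes
  obtain ⟨S, hSe, hS, a, haS, b, hbS, hab⟩ : ∃ S ⊆ e, S.card = r + 1 ∧
      ∃ a ∈ S, ∃ b ∈ S, c a ≠ c b := by
    obtain ⟨a, ha⟩ : e.Nonempty := Finset.card_pos.1 (by omega)
    obtain ⟨b, hb, hab⟩ : ∃ b ∈ e, c b ≠ c a := by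
      by_contra! h
      exact hc e he (by omega) ⟨c a, h⟩
    obtain ⟨S, h1, h2, h3⟩ := Finset.exists_subsuperset_card_eq (s := {a, b}) (t := e) (n := r + 1)
      (by intro x hx; simp only [Finset.mem_insert, Finset.mem_singleton] at hx
          rcases hx with rfl | rfl <;> assumption)
      (Finset.card_le_two.trans (by omega)) hcard
    exact ⟨S, h2, h3, a, h1 (by simp), b, h1 (by simp), hab.symm⟩
  have hcol' : ∀ u ∈ S, ∀ v ∈ S, col (S.erase u) = col (S.erase v) := fun u hu v hv =>
    hcol _ ((Finset.erase_subset _ _).trans hSe) (by rw [Finset.card_erase_of_mem hu, hS]; simp)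
      _ ((Finset.erase_subset _ _).trans hSe) (by rw [Finset.card_erase_of_mem hv, hS]; simp)
  -- the class of `v` is met elsewhere in `S`
  let Dbl : V → Prop := fun v => ∃ w ∈ S, w ≠ v ∧ c w = c v
  have himD : ∀ v ∈ S, Dbl v → (S.erase v).image c = S.image c := by
    rintro v hv ⟨w, hw, hwv, hcw⟩
    ext y
    simp only [Finset.mem_image, Finset.mem_erase]
    constructor
    · rintro ⟨z, hz, rfl⟩; exact ⟨z, hz.2, rfl⟩
    · rintro ⟨z, hz, rfl⟩
      by_cases hzv : z = v
      · exact ⟨w, ⟨hwv, hw⟩, by rw [hcw, hzv]⟩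
      · exact ⟨z, ⟨hzv, hz⟩, rfl⟩
  have himS : ∀ v ∈ S, ¬ Dbl v → (S.erase v).image c = (S.image c).erase (c v) := by
    intro v hv hD
    ext y
    simp only [Finset.mem_image, Finset.mem_erase]
    constructor
    · rintro ⟨z, hz, rfl⟩
      exact ⟨fun h => hD ⟨z, hz.2, hz.1, h⟩, z, hz.2, rfl⟩
    · rintro ⟨hy, z, hz, rfl⟩
      exact ⟨z, ⟨fun h => hy (by rw [h]), hz⟩, rfl⟩
  by_cases hall : ∀ v ∈ S, Dbl v
  · -- every class met is met at least twice, so at most `(r + 1) / 2 < r` classes are met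
    have hlt : (S.image c).card < r := by
      have h1 : 2 * (S.image c).card ≤ S.card := by
        refine Finset.mul_card_image_le_card S 2 fun y hy => ?_
        obtain ⟨v, hv, rfl⟩ := Finset.mem_image.1 hy
        obtain ⟨w, hw, hwv, hcw⟩ := hall v hv
        refine Finset.one_lt_card.2 ⟨w, ?_, v, ?_, hwv⟩ <;> simp [hw, hv, hcw]
      omega
    obtain ⟨p, hp, hpmin⟩ := Finset.exists_min_image S c ⟨a, haS⟩
    obtain ⟨q, hq, hqp⟩ : ∃ q ∈ S, c q ≠ c p := by
      by_cases h : c a = c p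
      · exact ⟨b, hbS, fun h' => hab (h.trans h'.symm)⟩
      · exact ⟨a, haS, h⟩
    have hlow : ∀ v ∈ S, lowCount (S.erase v) = ((S.filter fun u => c u = c p).erase v).card := by
      intro v hv
      simp only [lowCount]
      congr 1
      ext u
      simp only [Finset.mem_filter, Finset.mem_erase]
      constructor
      · rintro ⟨⟨huv, huS⟩, hu⟩
        refine ⟨huv, huS, le_antisymm ?_ (hpmin u huS)⟩
        by_cases hpv : p = v
        · obtain ⟨w, hw, hwp, hcw⟩ := hall p hp
          rw [← hcw]
          exact hu w ⟨hpv ▸ hwp, hw⟩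
        · exact hu p ⟨hpv, hp⟩
      · rintro ⟨huv, huS, hu⟩
        exact ⟨⟨huv, huS⟩, fun w hw => hu ▸ hpmin w hw.2⟩
    have hpF : p ∈ S.filter fun u => c u = c p := by simp [hp]
    have hqF : q ∉ S.filter fun u => c u = c p := by simp [hqp]
    have hposF := Finset.card_pos.2 ⟨p, hpF⟩
    have h := hcol' p hp q hq
    simp only [col, himD p hp (hall p hp), himD q hq (hall q hq), if_neg hlt.ne, hlow p hp,
      hlow q hq, Finset.card_erase_of_mem hpF, Finset.erase_eq_of_notMem hqF, Sum.inr.injEq,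
      Prod.mk.injEq, Fin.mk.injEq] at h
    omega
  · push Not at hall
    obtain ⟨v, hv, hDv⟩ := hall
    have hcv : c v ∈ S.image c := Finset.mem_image_of_mem c hv
    have hpos : 0 < (S.image c).card := Finset.card_pos.2 ⟨_, hcv⟩
    have hv' : ((S.erase v).image c).card = (S.image c).card - 1 := by
      rw [himS v hv hDv, Finset.card_erase_of_mem hcv]
    by_cases hsome : ∃ w ∈ S, Dbl w
    · obtain ⟨w, hw, hDw⟩ := hsome
      have h := hcol' v hv w hw
      simp only [col, hv', himD w hw hDw] at h
      split_ifs at h with h1 h2 h2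
      · omega
      · simp only [Sum.inr.injEq, Prod.mk.injEq, Fin.mk.injEq] at h
        omega
    · -- all classes are distinct
      push Not at hsome
      have hinj : Set.InjOn c S := by
        intro x hx y hy hxy
        by_contra hne
        exact hsome y hy ⟨x, hx, hne, hxy⟩
      have hT : (S.image c).card = r + 1 := by rw [Finset.card_image_of_injOn hinj, hS]
      set l := (S.image c).sort (· ≤ ·) with hl
      have hlen : l.length = r + 1 := by rw [hl, Finset.length_sort, hT]
      have hnd : l.Nodup := Finset.sort_nodup _ _
      have hso : l.Pairwise (· ≤ ·) := Finset.pairwise_sort _ _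
      have key : ∀ m : List (Fin n), m.Sublist l → m.length = r →
          ∃ Y ⊆ e, Y.card = r ∧ col Y = Sum.inl (g m) := by
        intro m hm hmr
        have hmn : m.Nodup := hnd.sublist hm
        have hsort : m.toFinset.sort (· ≤ ·) = m :=
          (List.toFinset_sort (· ≤ ·) hmn).2 (hso.sublist hm)
        have himg : (S.filter fun v => c v ∈ m).image c = m.toFinset := by
          ext y
          simp only [Finset.mem_image, Finset.mem_filter, List.mem_toFinset]
          constructor
          · rintro ⟨z, hz, rfl⟩; exact hz.2
          · intro hy
            have : y ∈ S.image c := by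
              rw [← Finset.mem_sort (· ≤ ·)]; exact hm.subset hy
            obtain ⟨z, hz, rfl⟩ := Finset.mem_image.1 this
            exact ⟨z, ⟨hz, hy⟩, rfl⟩
        have hc1 : ((S.filter fun v => c v ∈ m).image c).card = r := by
          rw [himg, List.toFinset_card_of_nodup hmn, hmr]
        refine ⟨S.filter fun v => c v ∈ m, (Finset.filter_subset _ _).trans hSe, ?_, ?_⟩
        · rwa [Finset.card_image_of_injOn (hinj.mono (Finset.coe_subset.2 (Finset.filter_subset _ _)))] at hc1
        · simp only [col]; rw [if_pos hc1, himg, hsort]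
      obtain ⟨Y, hY1, hY2, hY3⟩ := key l.dropLast (List.dropLast_sublist l) (by simp [hlen])
      obtain ⟨Y', hY1', hY2', hY3'⟩ := key l.tail (List.tail_sublist l) (by simp [hlen])
      have := hcol Y hY1 hY2 Y' hY1' hY2'
      rw [hY3, hY3'] at this
      exact hg l hnd hlen (Sum.inl.inj this)

/-! ### An upper bound for Ramsey numbers -/

/-- If `v` is above all elements of the `r`-set `Y ⊆ X`, the colour of `Y ∪ {v}` does not depend
on the choice of `v ∈ W`. For `W = X` this says that `X` is end-homogeneous for the
colouring `f` of `(r + 1)`-sets. -/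
def EndHom {α : Type*} [LinearOrder α] {k : ℕ} (f : Finset α → Fin k) (r : ℕ)
    (X W : Finset α) : Prop :=
  ∀ Y ⊆ X, Y.card = r → ∀ u ∈ W, ∀ v ∈ W, (∀ y ∈ Y, y < u) → (∀ y ∈ Y, y < v) →
    f (insert u Y) = f (insert v Y)

/-- Greedy construction of an end-homogeneous set: `X` is the part already chosen and `R` the
reservoir. The least element of `R` is moved to `X`, and the rest of `R` shrinks by a factor of at
most `k ^ M ^ s`, the number of colour patterns on the sets through the new vertex. -/
theorem exists_endHom {α : Type*} [LinearOrder α] {k : ℕ} (f : Finset α → Fin k) (s M : ℕ)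
    (d : ℕ) : ∀ X R : Finset α, (∀ x ∈ X, ∀ y ∈ R, x < y) → X.card + d ≤ M →
      EndHom f (s + 1) X (X ∪ R) → (k ^ M ^ s + 1) ^ d ≤ R.card →
      ∃ Z ⊆ X ∪ R, Z.card = X.card + d ∧ EndHom f (s + 1) Z Z := by
  classical
  have hk : 0 < k := (f ∅).pos
  induction d with
  | zero =>
    intro X R _ _ hX _
    exact ⟨X, Finset.subset_union_left, rfl, fun Y hY hc u hu v hv =>
      hX Y hY hc u (Finset.mem_union_left _ hu) v (Finset.mem_union_left _ hv)⟩
  | succ d ih =>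
    intro X R hXR hM hX hR
    set K := k ^ M ^ s with hK
    have hne : R.Nonempty := Finset.card_pos.1 (lt_of_lt_of_le (by positivity) hR)
    obtain ⟨x, hxR, hxmin⟩ := Finset.exists_min_image R id hne
    simp only [id] at hxmin
    have hxX : x ∉ X := fun h => lt_irrefl _ (hXR x h x hxR)
    -- the vertices above `x` are sorted by the colours they give to the sets `Y ∪ {x, ·}`
    let φ : α → (X.powersetCard s → Fin k) := fun v Y => f (insert v (insert x Y.1))
    have hcardφ : Fintype.card (X.powersetCard s → Fin k) ≤ K := by
      rw [Fintype.card_fun, Fintype.card_fin, Fintype.card_coe, Finset.card_powersetCard]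
      refine Nat.pow_le_pow_right hk ((Nat.choose_le_pow _ _).trans ?_)
      exact Nat.pow_le_pow_left (by omega) s
    have hpig : (Finset.univ : Finset (X.powersetCard s → Fin k)).card * (K + 1) ^ d
        ≤ (R.erase x).card := by
      rw [Finset.card_erase_of_mem hxR, Finset.card_univ]
      have h1 : Fintype.card (X.powersetCard s → Fin k) * (K + 1) ^ d ≤ K * (K + 1) ^ d :=
        Nat.mul_le_mul_right _ hcardφ
      have h2 : 0 < (K + 1) ^ d := by positivity
      rw [pow_succ, mul_comm, Nat.add_mul] at hR
      omega
    obtain ⟨ψ, -, hψ⟩ := Finset.exists_le_card_fiber_of_mul_le_card_of_maps_to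
      (f := φ) (fun _ _ => Finset.mem_univ _) ⟨fun _ => ⟨0, hk⟩, Finset.mem_univ _⟩ hpig
    set R' := (R.erase x).filter fun v => φ v = ψ with hR'
    have hR'R : R' ⊆ R := (Finset.filter_subset _ _).trans (Finset.erase_subset _ _)
    have hsub : insert x X ∪ R' ⊆ X ∪ R := by
      intro z hz
      simp only [Finset.mem_union, Finset.mem_insert] at hz ⊢
      rcases hz with (rfl | hz) | hz
      · exact Or.inr hxR
      · exact Or.inl hz
      · exact Or.inr (hR'R hz)
    have hxR' : ∀ y ∈ R', x < y := by
      intro y hy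
      have hy' := Finset.mem_erase.1 (Finset.mem_filter.1 hy).1
      exact lt_of_le_of_ne (hxmin y hy'.2) hy'.1.symm
    have hcX : (insert x X).card = X.card + 1 := Finset.card_insert_of_notMem hxX
    have hlt : ∀ z ∈ insert x X, ∀ y ∈ R', z < y := by
      intro z hz y hy
      rcases Finset.mem_insert.1 hz with rfl | hz
      · exact hxR' y hy
      · exact hXR z hz y (hR'R hy)
    have hend : EndHom f (s + 1) (insert x X) (insert x X ∪ R') := by
      intro Y hY hYc u hu v hv hYu hYv
      by_cases hxY : x ∈ Y
      · have hmem : ∀ w ∈ insert x X ∪ R', x < w → φ w = ψ := by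
          intro w hw hxw
          simp only [Finset.mem_union, Finset.mem_insert] at hw
          rcases hw with (rfl | hw) | hw
          · exact absurd hxw (lt_irrefl _)
          · exact absurd hxw (hXR w hw x hxR).not_gt
          · exact (Finset.mem_filter.1 hw).2
        have hY0 : Y.erase x ∈ X.powersetCard s := by
          refine Finset.mem_powersetCard.2 ⟨fun z hz => ?_, ?_⟩
          · obtain ⟨h1, h2⟩ := Finset.mem_erase.1 hz
            exact (Finset.mem_insert.1 (hY h2)).resolve_left h1
          · rw [Finset.card_erase_of_mem hxY, hYc]; rfl
        have h := congrFun ((hmem u hu (hYu x hxY)).trans (hmem v hv (hYv x hxY)).symm)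
          ⟨_, hY0⟩
        simpa only [φ, Finset.insert_erase hxY] using h
      · refine hX Y (fun z hz => ?_) hYc u (hsub hu) v (hsub hv) hYu hYv
        exact (Finset.mem_insert.1 (hY hz)).resolve_left fun h => hxY (h ▸ hz)
    obtain ⟨Z, hZ1, hZ2, hZ3⟩ := ih (insert x X) R' hlt (by omega) hend hψ
    exact ⟨Z, hZ1.trans hsub, by omega, hZ3⟩

/-- The Erdős–Rado recursion: with `q = k + 2`, any `ramseyBound q j - 1` vertices contain, for
each `k`-colouring of the `(j + 1)`-sets, a monochromatic `(j + 2)`-set. -/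
def ramseyBound (q : ℕ) : ℕ → ℕ
  | 0 => q
  | j + 1 => q ^ ramseyBound q j ^ (j + 1)

theorem le_ramseyBound (q : ℕ) (hq : 2 ≤ q) (j : ℕ) : q ≤ ramseyBound q j := by
  cases j with
  | zero => exact le_rfl
  | succ j =>
    have := le_ramseyBound q hq j
    exact Nat.le_self_pow (pow_ne_zero _ (by omega)) q

/-- In an end-homogeneous set `Z` with maximum `z`, a set monochromatic for `Y ↦ f (Y ∪ {z})`
becomes monochromatic for `f` after adding `z`. -/
theorem exists_mono {α : Type*} [LinearOrder α] {k : ℕ} (j : ℕ) :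
    ∀ (f : Finset α → Fin k) (S : Finset α), ramseyBound (k + 2) j ≤ S.card + 1 →
      ∃ X ⊆ S, X.card = j + 2 ∧ ∃ i, ∀ Y ⊆ X, Y.card = j + 1 → f Y = i := by
  classical
  induction j with
  | zero =>
    intro f S hS
    simp only [ramseyBound] at hS
    obtain ⟨a, ha, b, hb, hab, hf⟩ := Finset.exists_ne_map_eq_of_card_lt_of_maps_to
      (s := S) (t := (Finset.univ : Finset (Fin k))) (f := fun a => f {a})
      (by simp; omega) (fun _ _ => Finset.mem_univ _)
    refine ⟨{a, b}, ?_, Finset.card_pair hab, f {a}, ?_⟩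
    · intro z hz
      rcases Finset.mem_insert.1 hz with rfl | hz
      · exact ha
      · rw [Finset.mem_singleton.1 hz]; exact hb
    · intro Y hY hc
      obtain ⟨z, rfl⟩ := Finset.card_eq_one.1 hc
      have hz := hY (Finset.mem_singleton_self z)
      rcases Finset.mem_insert.1 hz with rfl | hz
      · rfl
      · rw [Finset.mem_singleton.1 hz]; exact hf.symm
  | succ j ih =>
    intro f S hS
    set M := ramseyBound (k + 2) j with hMdef
    have hM : k + 2 ≤ M := le_ramseyBound _ (by omega) j
    have hMpos : 0 < M := by omega
    have hbound : (k ^ M ^ j + 1) ^ M ≤ S.card := by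
      have hA : 0 < M ^ j := by positivity
      have h1 : k ^ M ^ j + 1 ≤ (k + 1) ^ M ^ j := by
        have := Nat.pow_lt_pow_left (Nat.lt_succ_self k) hA.ne'
        exact this
      have h2 : (k ^ M ^ j + 1) ^ M ≤ (k + 1) ^ M ^ (j + 1) := by
        rw [pow_succ, pow_mul]; exact Nat.pow_le_pow_left h1 M
      have h3 : (k + 1) ^ M ^ (j + 1) < (k + 2) ^ M ^ (j + 1) :=
        Nat.pow_lt_pow_left (by omega) (by positivity)
      have h4 : (k + 2) ^ M ^ (j + 1) ≤ S.card + 1 := hS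
      omega
    obtain ⟨Z, hZS, hZc, hZ⟩ := exists_endHom f j M M ∅ S (by simp) (by simp)
      (by intro Y hY hc
          rw [Finset.subset_empty.1 hY] at hc
          simp at hc) hbound
    rw [Finset.empty_union] at hZS
    rw [Finset.card_empty, zero_add] at hZc
    obtain ⟨z, hzZ, hzmax⟩ := Finset.exists_max_image Z id (Finset.card_pos.1 (by omega))
    simp only [id] at hzmax
    obtain ⟨X, hXZ, hXc, i, hi⟩ := ih (fun Y => f (insert z Y)) (Z.erase z)
      (by rw [Finset.card_erase_of_mem hzZ]; omega)
    have hzX : z ∉ X := fun h => (Finset.mem_erase.1 (hXZ h)).1 rfl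
    have hXZ' : X ⊆ Z := hXZ.trans (Finset.erase_subset _ _)
    refine ⟨insert z X, Finset.insert_subset (hZS hzZ) (hXZ'.trans hZS),
      by rw [Finset.card_insert_of_notMem hzX, hXc], i, fun Y hY hYc => ?_⟩
    by_cases hzY : z ∈ Y
    · have h := hi (Y.erase z) (fun w hw => ?_) (by rw [Finset.card_erase_of_mem hzY, hYc]; rfl)
      · simpa only [Finset.insert_erase hzY] using h
      · obtain ⟨h1, h2⟩ := Finset.mem_erase.1 hw
        exact (Finset.mem_insert.1 (hY h2)).resolve_left h1
    · have hYX : Y ⊆ X := fun w hw =>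
        (Finset.mem_insert.1 (hY hw)).resolve_left fun h => hzY (h ▸ hw)
      obtain ⟨u, huY, humax⟩ := Finset.exists_max_image Y id (Finset.card_pos.1 (by omega))
      simp only [id] at humax
      have hc0 : (Y.erase u).card = j + 1 := by rw [Finset.card_erase_of_mem huY, hYc]; rfl
      have h := hZ (Y.erase u) ((Finset.erase_subset _ _).trans (hYX.trans hXZ')) hc0
        u (hXZ' (hYX huY)) z hzZ
        (fun y hy => lt_of_le_of_ne (humax y (Finset.mem_erase.1 hy).2) (Finset.mem_erase.1 hy).1)
        (fun y hy => by
          have hyX := hYX (Finset.mem_erase.1 hy).2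
          exact lt_of_le_of_ne (hzmax y (hXZ' hyX)) fun h => hzX (h ▸ hyX))
      rw [Finset.insert_erase huY] at h
      rw [h]
      exact hi _ ((Finset.erase_subset _ _).trans hYX) hc0

/-! ### Towers against iterated logarithms -/

/-- The tower `2 ^ 2 ^ ⋯ ^ 2 ^ y` with `j` twos. -/
noncomputable def tower (j : ℕ) (y : ℝ) : ℝ := (fun x : ℝ => (2 : ℝ) ^ x)^[j] y

theorem tower_succ (j : ℕ) (y : ℝ) : tower (j + 1) y = (2 : ℝ) ^ tower j y :=
  Function.iterate_succ_apply' _ _ _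

theorem tower_mono (j : ℕ) {x y : ℝ} (h : x ≤ y) : tower j x ≤ tower j y := by
  induction j with
  | zero => exact h
  | succ j ih =>
    rw [tower_succ, tower_succ]
    exact Real.rpow_le_rpow_of_exponent_le (by norm_num) ih

theorem one_lt_tower (j : ℕ) {y : ℝ} (hy : 1 < y) : 1 < tower j y := by
  induction j with
  | zero => exact hy
  | succ j ih =>
    rw [tower_succ]
    exact Real.one_lt_rpow (by norm_num) (by linarith)

theorem two_pow_mul_tower_le (j a : ℕ) {y : ℝ} (hy : 1 < y) :
    2 ^ a * tower (j + 1) y ≤ tower (j + 1) (y + a) := by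
  induction j with
  | zero =>
    rw [tower_succ, tower_succ]
    simp only [tower, Function.iterate_zero, id]
    rw [Real.rpow_add (by norm_num), Real.rpow_natCast, mul_comm]
  | succ j ih =>
    rw [tower_succ (j + 1), tower_succ (j + 1), ← Real.rpow_natCast,
      ← Real.rpow_add (by norm_num)]
    refine Real.rpow_le_rpow_of_exponent_le (by norm_num) (le_trans ?_ ih)
    have ht := one_lt_tower (j + 1) hy
    have ha : (a : ℝ) + 1 ≤ 2 ^ a := by exact_mod_cast Nat.lt_two_pow_self
    have ha0 : (0 : ℝ) ≤ a := Nat.cast_nonneg a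
    nlinarith

/-- The hypothesis `1 < y` forces every truncated logarithm involved to be a true one. -/
theorem tower_le_of_le_iterate_LogR (j : ℕ) :
    ∀ {x y : ℝ}, 0 < x → 1 < y → y ≤ LogR^[j] x → tower j y ≤ x := by
  induction j with
  | zero => intro x y _ _ h; exact h
  | succ j ih =>
    intro x y hx hy h
    rw [Function.iterate_succ_apply] at h
    have h1 := ih (lt_of_lt_of_le one_pos (le_max_left _ _)) hy h
    have h2 := one_lt_tower j hy
    have h3 : tower j y ≤ Real.logb 2 x := by
      rcases le_max_iff.1 h1 with h | h
      · linarith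
      · exact h
    rw [tower_succ]
    exact (Real.le_logb_iff_rpow_le (by norm_num) hx).1 h3

/-- The first logarithm of `ramseyBound q 1 = q ^ q` is `q log₂ q`. Passing to rank three at most
doubles it, up to the slack in `5 / 2`. Each later rank only adds a constant, because the power
`j + 4` is absorbed two exponentials further down. -/
theorem ramseyBound_le_tower (q : ℕ) (hq : 2 ≤ q) (j : ℕ) :
    (ramseyBound q (j + 1) : ℝ) ≤
      tower (j + 1) (5 / 2 * (q * Real.logb 2 q) + (j + 2) ^ 2) := by
  have hq' : (2 : ℝ) ≤ q := by exact_mod_cast hq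
  have hlg : 1 ≤ Real.logb 2 q :=
    (Real.le_logb_iff_rpow_le (by norm_num) (by linarith)).2 (by simpa using hq')
  set y := (q : ℝ) * Real.logb 2 q with hy
  have hy2 : 2 ≤ y := by nlinarith
  have hq2 : (q : ℝ) = 2 ^ Real.logb 2 (q : ℝ) :=
    (Real.rpow_logb (by norm_num) (by norm_num) (by linarith)).symm
  have hqq : (q : ℝ) ≤ 2 ^ (q : ℝ) := by
    rw [Real.rpow_natCast]; exact_mod_cast Nat.lt_two_pow_self.le
  have hP1 : (ramseyBound q 1 : ℝ) = 2 ^ y := by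
    simp only [ramseyBound, zero_add, pow_one]
    rw [hy, mul_comm, Real.rpow_mul (by norm_num), ← hq2, Real.rpow_natCast]
    push_cast; rfl
  have hexp : ∀ m : ℕ, (q : ℝ) ^ m ≤ 2 ^ ((q : ℝ) * m) := by
    intro m
    rw [Real.rpow_mul (by norm_num), Real.rpow_natCast _ m]
    exact pow_le_pow_left₀ (by linarith) hqq m
  match j with
  | 0 =>
    rw [zero_add, hP1, tower_succ]
    refine Real.rpow_le_rpow_of_exponent_le (by norm_num) ?_
    simp only [tower, Function.iterate_zero, id]
    push_cast; linarith
  | 1 =>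
    have hP2 : (ramseyBound q (1 + 1) : ℝ) ≤ 2 ^ ((q : ℝ) * ((2 : ℝ) ^ y) ^ 2) := by
      have := hexp (ramseyBound q 1 ^ 2)
      push_cast at this
      rw [hP1] at this
      rw [ramseyBound]; push_cast
      exact this
    refine hP2.trans ?_
    rw [tower_succ, tower_succ]
    refine Real.rpow_le_rpow_of_exponent_le (by norm_num) ?_
    simp only [tower, Function.iterate_zero, id]
    have : (q : ℝ) * ((2 : ℝ) ^ y) ^ 2 = 2 ^ (Real.logb 2 (q : ℝ) + 2 * y) := by
      rw [Real.rpow_add (by norm_num), ← hq2, mul_comm 2 y, Real.rpow_mul (by norm_num) y 2,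
        Real.rpow_two]
    rw [this]
    refine Real.rpow_le_rpow_of_exponent_le (by norm_num) ?_
    have : 2 * Real.logb 2 (q : ℝ) ≤ y := by rw [hy]; gcongr
    push_cast; linarith
  | j + 2 =>
    have ih := ramseyBound_le_tower q hq (j + 1)
    rw [← hy] at ih
    set P := ramseyBound q (j + 1 + 1) with hP
    have hqP : q ≤ P := le_ramseyBound q hq _
    set z := 5 / 2 * y + (((j + 1 : ℕ) : ℝ) + 2) ^ 2 with hz
    have hz1 : 1 < z := by rw [hz]; nlinarith [sq_nonneg (((j + 1 : ℕ) : ℝ) + 2)]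
    have hstep : (ramseyBound q (j + 2 + 1) : ℝ) ≤ 2 ^ ((P : ℝ) ^ (j + 4)) := by
      have h1 : ramseyBound q (j + 2 + 1) = q ^ P ^ (j + 3) := rfl
      rw [h1]
      push_cast
      have h2 := hexp (P ^ (j + 3))
      refine h2.trans (Real.rpow_le_rpow_of_exponent_le (by norm_num) ?_)
      push_cast
      rw [pow_succ _ (j + 3), mul_comm]
      gcongr
    refine hstep.trans ?_
    rw [tower_succ]
    refine Real.rpow_le_rpow_of_exponent_le (by norm_num) ?_
    rw [tower_succ] at ih ⊢
    have h5 : (P : ℝ) ^ (j + 4) ≤ 2 ^ (tower (j + 1) z * ((j + 4 : ℕ) : ℝ)) := by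
      rw [Real.rpow_mul (by norm_num), Real.rpow_natCast _ (j + 4)]
      exact pow_le_pow_left₀ (Nat.cast_nonneg _) ih _
    refine h5.trans (Real.rpow_le_rpow_of_exponent_le (by norm_num) ?_)
    have h6 := two_pow_mul_tower_le j (j + 4) hz1
    have h7 : ((j + 4 : ℕ) : ℝ) ≤ 2 ^ (j + 4) := by exact_mod_cast Nat.lt_two_pow_self.le
    have h8 := one_lt_tower (j + 1) hz1
    calc tower (j + 1) z * ((j + 4 : ℕ) : ℝ) ≤ 2 ^ (j + 4) * tower (j + 1) z := by
          rw [mul_comm]; gcongr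
      _ ≤ _ := h6
      _ ≤ _ := by
          refine tower_mono _ ?_
          rw [hz]; push_cast
          have : (0 : ℝ) ≤ j := Nat.cast_nonneg j
          nlinarith

/-- With about `L / (3 log₂ L)` colours, `5 / 2 * q log₂ q` is at most `5 / 6 * L` up to lower
order terms. -/
theorem eventually_tower_arg_le (r : ℕ) : ∃ L₀ : ℝ, ∀ L : ℝ, L₀ ≤ L → ∀ q : ℕ, 2 ≤ q →
    (q : ℝ) ≤ 1 / 3 * L / LogR L + 2 →
    5 / 2 * (q * Real.logb 2 q) + (r : ℝ) ^ 2 ≤ L := by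
  have hlo : ∀ᶠ L : ℝ in Filter.atTop, 5 * Real.logb 2 L + (r : ℝ) ^ 2 ≤ L / 6 := by
    have h1 := (Real.isLittleO_log_id_atTop.bound (show (0 : ℝ) < Real.log 2 / 60 by positivity))
    filter_upwards [h1, Filter.eventually_ge_atTop (12 * (r : ℝ) ^ 2),
      Filter.eventually_ge_atTop 1] with L h2 h3 h4
    simp only [id, Real.norm_eq_abs] at h2
    rw [abs_of_nonneg (Real.log_nonneg h4), abs_of_nonneg (by linarith)] at h2
    have h5 : Real.logb 2 L ≤ L / 60 := by
      rw [Real.logb, div_le_iff₀ (by positivity)]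
      linarith
    linarith
  obtain ⟨L₁, hL₁⟩ := Filter.eventually_atTop.1 hlo
  refine ⟨max L₁ 3, fun L hL q hq hqL => ?_⟩
  have hL3 : 3 ≤ L := (le_max_right _ _).trans hL
  have h1 := hL₁ L ((le_max_left _ _).trans hL)
  have hq' : (2 : ℝ) ≤ q := by exact_mod_cast hq
  have hl1 : 1 ≤ Real.logb 2 L :=
    (Real.le_logb_iff_rpow_le (by norm_num) (by linarith)).2 (by norm_num; linarith)
  rw [LogR, max_eq_right hl1] at hqL
  set ℓ := Real.logb 2 L
  have hqL' : (q : ℝ) ≤ L := by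
    have : 1 / 3 * L / ℓ ≤ 1 / 3 * L := div_le_self (by linarith) hl1
    linarith
  have hlgq : Real.logb 2 q ≤ ℓ := Real.logb_le_logb_of_le (by norm_num) (by linarith) hqL'
  have h2 : (q : ℝ) * Real.logb 2 q ≤ (1 / 3 * L / ℓ + 2) * ℓ := by
    have : 0 ≤ Real.logb 2 (q : ℝ) := Real.logb_nonneg (by norm_num) (by linarith)
    gcongr
  have h3 : (1 / 3 * L / ℓ + 2) * ℓ = 1 / 3 * L + 2 * ℓ := by
    field_simp
  linarith

/-! ### Complete hypergraphs -/

theorem chromNum_complete (r n : ℕ) (hr : 1 ≤ r) :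
    chromNum (completeEdges (r * n) (r + 1)) = n := by
  classical
  apply le_antisymm
  · refine Nat.sInf_le ⟨fun v => ⟨v.1 / r, Nat.div_lt_of_lt_mul v.2⟩, ?_⟩
    rintro e he - ⟨i, hi⟩
    have hle : e.card ≤ (Finset.Ico (i.1 * r) (i.1 * r + r)).card := by
      refine Finset.card_le_card_of_injOn (fun v => v.1) (fun v hv => ?_)
        (fun a _ b _ h => Fin.ext h)
      have h := congrArg Fin.val (hi v hv)
      simp only at h
      have h1 := Nat.div_add_mod v.1 r
      have h2 := Nat.mod_lt v.1 (show 0 < r by omega)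
      rw [h, mul_comm] at h1
      simp only [Finset.coe_Ico, Set.mem_Ico]
      omega
    have he' : e.card = r + 1 := he
    rw [Nat.card_Ico] at hle
    omega
  · refine le_csInf ⟨r * n, id, ?_⟩ ?_
    · rintro e - he ⟨i, hi⟩
      obtain ⟨a, ha, b, hb, hab⟩ := Finset.one_lt_card.1 he
      exact hab ((hi a ha).trans (hi b hb).symm)
    · rintro k ⟨c, hc⟩
      by_contra! hlt
      obtain ⟨i, -, hi⟩ := Finset.exists_lt_card_fiber_of_mul_lt_card_of_maps_to
        (s := (Finset.univ : Finset (Fin (r * n)))) (t := (Finset.univ : Finset (Fin k)))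
        (f := c) (n := r) (fun _ _ => Finset.mem_univ _)
        (by simp only [Finset.card_univ, Fintype.card_fin]; rw [mul_comm]
            exact Nat.mul_lt_mul_of_pos_left hlt (by omega))
      obtain ⟨e, he, hec⟩ := Finset.exists_subset_card_eq (Nat.succ_le_of_lt hi)
      exact hc e hec (by omega) ⟨i, fun v hv => (Finset.mem_filter.1 (he hv)).2⟩

/-- The infimum defining `kNum` is attained: an injective colouring shows that the set of admissible
numbers of colours is nonempty. -/
theorem exists_goodColouring_kNum (m r : ℕ) (hr : 1 ≤ r) :
    ∃ c : Finset (Fin m) → Fin (kNum (completeEdges m (r + 1)) r),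
      GoodColouring (completeEdges m (r + 1)) r _ c := by
  classical
  refine Nat.sInf_mem (s := {k | ∃ c : Finset (Fin m) → Fin k,
    GoodColouring (completeEdges m (r + 1)) r k c}) ?_
  refine ⟨Fintype.card (Finset (Fin m)), Fintype.equivFin _, ?_⟩
  rintro e he hc ⟨i, hi⟩
  obtain ⟨a, ha, b, hb, hab⟩ := Finset.one_lt_card.1 (show 1 < e.card by omega)
  have he' : e.card = r + 1 := he
  have h := (hi (e.erase a) (Finset.erase_subset _ _)
    (by rw [Finset.card_erase_of_mem ha, he']; rfl)).trans
    (hi (e.erase b) (Finset.erase_subset _ _)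
      (by rw [Finset.card_erase_of_mem hb, he']; rfl)).symm
  have h' := (Fintype.equivFin (Finset (Fin m))).injective h
  have : a ∈ e.erase b := Finset.mem_erase.2 ⟨hab, ha⟩
  rw [← h'] at this
  exact (Finset.mem_erase.1 this).1 rfl

theorem LogR_tendsto : Filter.Tendsto LogR Filter.atTop Filter.atTop :=
  Filter.tendsto_atTop_mono (fun _ => le_max_right _ _) (Real.tendsto_logb_atTop (by norm_num))

theorem stmt_18 :
    (∃ β₂ : ℝ, ∀ n r : ℕ, 2 ≤ r → r ≤ n →
      ∀ (V : Type*) (E : Set (Finset V)), chromNum E = n →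
        (kNum E r : ℝ) ≤ 2 / (Real.logb 2 1073 / 6) * LogR^[r - 1] (r * n)
          + 5 * (r : ℝ) / 2 + β₂) ∧
    (∀ r : ℕ, 2 ≤ r → ∃ N : ℕ, ∀ n : ℕ, r ≤ n → N ≤ r * n →
      chromNum (completeEdges (r * n) (r + 1)) = n ∧
      ⌊(1 / 3 : ℝ) * LogR^[r - 1] (r * n) / LogR^[r] (r * n)⌋₊
        < kNum (completeEdges (r * n) (r + 1)) r) := by
  constructor
  · refine ⟨18, fun n r hr hrn V E hE => ?_⟩
    have hmem : n ∈ {k | ∃ c : V → Fin k, ∀ e ∈ E, 2 ≤ e.card →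
        ¬ ∃ i : Fin k, ∀ v ∈ e, c v = i} := by
      rw [← hE]
      refine Nat.sInf_mem (Set.nonempty_iff_ne_empty.2 fun h => ?_)
      rw [chromNum, h, Nat.sInf_empty] at hE
      omega
    obtain ⟨c, hc⟩ := hmem
    obtain ⟨k, -, hkL, g, hg⟩ := exists_shift_colouring n (by omega) (r - 1)
    obtain ⟨c', hc'⟩ := exists_goodColouring E n r k hr c hc g
      (fun l hl hlen => hg l hl (by omega))
    have hle : kNum E r ≤ k + 4 := Nat.sInf_le ⟨c', hc'⟩
    have hle' : (kNum E r : ℝ) ≤ k + 4 := by exact_mod_cast hle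
    have hn1 : (1 : ℝ) ≤ n := by exact_mod_cast (show 1 ≤ n by omega)
    have hr2 : (2 : ℝ) ≤ r := by exact_mod_cast hr
    have hmono : LogR^[r - 1] (n : ℝ) ≤ LogR^[r - 1] ((r : ℝ) * n) :=
      iterate_LogR_mono hn1 (by nlinarith) _
    have hpos := one_le_iterate_LogR hn1 (r - 1)
    -- `1073 < 2 ^ 11`, hence `12 / 11 ≤ 2 / α`
    have hα : (12 / 11 : ℝ) ≤ 2 / (Real.logb 2 1073 / 6) := by
      have h1 : Real.logb 2 1073 ≤ 11 :=
        (Real.logb_le_iff_le_rpow (by norm_num) (by norm_num)).2 (by norm_num)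
      have h2 : 0 < Real.logb 2 1073 := Real.logb_pos (by norm_num) (by norm_num)
      rw [le_div_iff₀ (by positivity)]
      linarith
    have hmul : 12 / 11 * LogR^[r - 1] (n : ℝ) ≤
        2 / (Real.logb 2 1073 / 6) * LogR^[r - 1] ((r : ℝ) * n) := by
      gcongr
    linarith
  · intro r hr
    obtain ⟨L₀, hL₀⟩ := eventually_tower_arg_le r
    have htend : Filter.Tendsto (fun m : ℕ => LogR^[r - 1] (m : ℝ)) Filter.atTop Filter.atTop :=
      (LogR_tendsto.iterate (r - 1)).comp tendsto_natCast_atTop_atTop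
    obtain ⟨N, hN⟩ := Filter.eventually_atTop.1 (htend.eventually_ge_atTop L₀)
    refine ⟨N, fun n hrn hNn => ⟨chromNum_complete r n (by omega), ?_⟩⟩
    have hL := hN (r * n) hNn
    push_cast at hL
    obtain ⟨j, rfl⟩ : ∃ j, r = j + 2 := ⟨r - 2, by omega⟩
    have hr1 : j + 2 - 1 = j + 1 := rfl
    rw [Function.iterate_succ_apply' LogR (j + 1)]
    rw [hr1] at hL ⊢
    set x : ℝ := ((j + 2 : ℕ) : ℝ) * (n : ℝ) with hx
    set L := LogR^[j + 1] x with hLdef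
    set kk := kNum (completeEdges ((j + 2) * n) (j + 2 + 1)) (j + 2) with hkk
    by_contra! hcon
    have hL1 : 1 ≤ L := by
      rw [hLdef, Function.iterate_succ_apply']; exact le_max_left _ _
    have hlog1 : 1 ≤ LogR L := le_max_left _ _
    have hkk' : (kk : ℝ) ≤ 1 / 3 * L / LogR L :=
      (Nat.le_floor_iff (by positivity)).1 hcon
    have harg := hL₀ L (by simpa [hx] using hL) (kk + 2) (by omega) (by push_cast; linarith)
    have hxpos : 0 < x := by
      rw [hx]
      have : 0 < (j + 2) * n := Nat.mul_pos (by omega) (by omega)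
      exact_mod_cast this
    have hlgq : 0 ≤ Real.logb 2 ((kk + 2 : ℕ) : ℝ) :=
      Real.logb_nonneg (by norm_num) (by push_cast; linarith [(Nat.cast_nonneg kk : (0 : ℝ) ≤ kk)])
    have h1 := ramseyBound_le_tower (kk + 2) (by omega) j
    have h2 := tower_le_of_le_iterate_LogR (j + 1) hxpos
      (y := 5 / 2 * (((kk + 2 : ℕ) : ℝ) * Real.logb 2 ((kk + 2 : ℕ) : ℝ)) + ((j : ℝ) + 2) ^ 2)
      (by
        have : 0 ≤ ((kk + 2 : ℕ) : ℝ) * Real.logb 2 ((kk + 2 : ℕ) : ℝ) := by positivity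
        nlinarith [(Nat.cast_nonneg j : (0 : ℝ) ≤ j)])
      (by rw [← hLdef]; simpa using harg)
    have h3 : ramseyBound (kk + 2) (j + 1) ≤ (j + 2) * n := by
      have := h1.trans h2
      rw [hx] at this
      exact_mod_cast this
    obtain ⟨c, hc⟩ := exists_goodColouring_kNum ((j + 2) * n) (j + 2) (by omega)
    obtain ⟨X, -, hX, i, hi⟩ := exists_mono (j + 1) c Finset.univ
      (by simp only [Finset.card_univ, Fintype.card_fin]; rw [← hkk]; omega)
    exact hc X hX hX.ge ⟨i, hi⟩
end

section
/- There exists a real constant C > 0 such that for every integer k ≥ 2, ⌈C · 1073^{k/6}⌉ ↛ (3)_k^2; that is, there is a colouring of the edges of the complete graph on ⌈C · 1073^{k/6}⌉ vertices with k colours containing no monochromatic triangle. -/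
/-- The integers `1, …, N` can be coloured with `k` colours so that no `x`, `y`, `x + y`
(`x = y` allowed) have the same colour. The colouring is total on `ℕ`, and its values outside
`{1, …, N}` are irrelevant. -/
def SumFreePartition (k N : ℕ) : Prop :=
  ∃ f : ℕ → ℕ, (∀ x, f x < k) ∧
    ∀ x y, 1 ≤ x → 1 ≤ y → x + y ≤ N → ¬ (f x = f y ∧ f (x + y) = f x)

/-- The template of width `33`, indexed by residues modulo `33`: the entry at `0` is the colour
of `33`. -/
def template (r : ℕ) : ℕ :=
  [3, 0, 1, 2, 2, 1, 0, 3, 3, 0, 2, 2, 2, 0, 1, 1, 0, 3, 3, 3, 0, 3, 3, 3, 0, 1, 1, 0, 2, 2, 2,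
    0, 3].getD r 0

set_option maxRecDepth 10000 in
/-- The colours `0, 1, 2` of the template are sum-free modulo `33`. -/
lemma template_cyclic : ∀ r < 33, ∀ s < 33, template r ≠ 3 → template r = template s →
    template ((r + s) % 33) ≠ template r := by
  decide

set_option maxRecDepth 10000 in
/-- The colour `3` of the template is sum-free in `{1, …, 33}`. -/
lemma template_special : ∀ r < 34, ∀ s < 34, ¬ (1 ≤ r ∧ 1 ≤ s ∧ r + s ≤ 33 ∧
    template (r % 33) = 3 ∧ template (s % 33) = 3 ∧ template ((r + s) % 33) = 3) := by
  decide

lemma template_le : ∀ r < 33, template r ≤ 3 := by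
  decide

lemma SumFreePartition.mono {k l N : ℕ} (h : SumFreePartition k N) (hkl : k ≤ l) :
    SumFreePartition l N := by
  obtain ⟨f, hf, hs⟩ := h
  exact ⟨f, fun x => (hf x).trans_le hkl, hs⟩

lemma SumFreePartition.step {k N : ℕ} (h : SumFreePartition k N) :
    SumFreePartition (k + 3) (33 * N) := by
  obtain ⟨f, hf, hs⟩ := h
  -- `(x + 32) / 33` is `⌈x / 33⌉`.
  refine ⟨fun x => if template (x % 33) = 3 then f ((x + 32) / 33) + 3 else template (x % 33),
    fun x => ?_, ?_⟩
  · have h1 := hf ((x + 32) / 33)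
    have h2 := template_le (x % 33) (Nat.mod_lt _ (by norm_num))
    dsimp only
    split_ifs <;> omega
  · rintro x y hx hy hxy ⟨h1, h2⟩
    have lx := template_le (x % 33) (Nat.mod_lt _ (by norm_num))
    have ly := template_le (y % 33) (Nat.mod_lt _ (by norm_num))
    have lz := template_le ((x + y) % 33) (Nat.mod_lt _ (by norm_num))
    dsimp only at h1 h2
    by_cases tx : template (x % 33) = 3
    · have ty : template (y % 33) = 3 := by
        by_contra ty
        rw [if_pos tx, if_neg ty] at h1
        omega
      have tz : template ((x + y) % 33) = 3 := by
        by_contra tz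
        rw [if_pos tx, if_neg tz] at h2
        omega
      rw [if_pos tx, if_pos ty] at h1
      rw [if_pos tx, if_pos tz] at h2
      by_cases hc : (x + y + 32) / 33 = (x + 32) / 33 + (y + 32) / 33
      · refine hs ((x + 32) / 33) ((y + 32) / 33) (by omega) (by omega) (by omega) ⟨by omega, ?_⟩
        rw [← hc]
        omega
      · -- The representatives of `x` and `y` in `{1, …, 33}` have sum at most `33`.
        refine template_special ((x + 32) % 33 + 1) (by omega) ((y + 32) % 33 + 1) (by omega)
          ⟨by omega, by omega, by omega, ?_⟩
        rw [show ((x + 32) % 33 + 1) % 33 = x % 33 by omega,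
          show ((y + 32) % 33 + 1) % 33 = y % 33 by omega,
          show ((x + 32) % 33 + 1 + ((y + 32) % 33 + 1)) % 33 = (x + y) % 33 by omega]
        exact ⟨tx, ty, tz⟩
    · have ty : template (y % 33) ≠ 3 := by
        intro ty
        rw [if_neg tx, if_pos ty] at h1
        omega
      have tz : template ((x + y) % 33) ≠ 3 := by
        intro tz
        rw [if_neg tx, if_pos tz] at h2
        omega
      rw [if_neg tx, if_neg ty] at h1
      rw [if_neg tx, if_neg tz] at h2
      have key := template_cyclic (x % 33) (Nat.mod_lt _ (by norm_num)) (y % 33)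
        (Nat.mod_lt _ (by norm_num)) tx h1
      rw [← Nat.add_mod] at key
      exact key h2

lemma sumFreePartition_pow (m : ℕ) : SumFreePartition (3 * m + 1) (33 ^ m) := by
  induction m with
  | zero => exact ⟨fun _ => 0, fun _ => by norm_num, fun x y hx hy h => by omega⟩
  | succ m ih =>
    have h := ih.step
    rw [pow_succ, mul_comm (33 ^ m)]
    exact h

lemma SumFreePartition.not_arrows {k N n : ℕ} (h : SumFreePartition k N) (hn : n ≤ N + 1) :
    ¬ Arrows n 2 k 3 := by
  obtain ⟨f, hf, hs⟩ := h
  intro hA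
  -- On a pair, twice the maximum minus the sum is the difference.
  obtain ⟨i, X, hX, hc, hi⟩ := hA fun Y => ⟨f (2 * Y.sup id - ∑ y ∈ Y, y), hf _⟩
  have pair : ∀ a ∈ X, ∀ b ∈ X, a < b → f (b - a) = i := by
    intro a ha b hb hab
    have h1 := hi {a, b} (by intro z; simp; rintro (rfl | rfl) <;> assumption)
      (Finset.card_pair hab.ne)
    have h2 := congrArg Fin.val h1
    simp only [Finset.sum_pair hab.ne, Finset.sup_insert, Finset.sup_singleton, id] at h2
    rwa [sup_eq_right.2 hab.le, show 2 * b - (a + b) = b - a by omega] at h2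
  have main : ∀ a ∈ X, ∀ b ∈ X, ∀ c ∈ X, a < b → b < c → False := by
    intro a ha b hb c hc hab hbc
    have hcn := Finset.mem_range.1 (hX hc)
    refine hs (b - a) (c - b) (by omega) (by omega) (by omega) ⟨?_, ?_⟩
    · rw [pair a ha b hb hab, pair b hb c hc hbc]
    · rw [show b - a + (c - b) = c - a by omega, pair a ha b hb hab,
        pair a ha c hc (hab.trans hbc)]
  obtain ⟨a, b, c, hab, hac, hbc, rfl⟩ := Finset.card_eq_three.1 hc
  have ma : a ∈ ({a, b, c} : Finset ℕ) := by simp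
  have mb : b ∈ ({a, b, c} : Finset ℕ) := by simp
  have mc : c ∈ ({a, b, c} : Finset ℕ) := by simp
  rcases lt_or_gt_of_ne hab with h1 | h1 <;> rcases lt_or_gt_of_ne hac with h2 | h2 <;>
    rcases lt_or_gt_of_ne hbc with h3 | h3
  · exact main a ma b mb c mc h1 h3
  · exact main a ma c mc b mb h2 h3
  · omega
  · exact main c mc a ma b mb h2 h1
  · exact main b mb a ma c mc h1 h2
  · omega
  · exact main b mb c mc a ma h3 h2
  · exact main c mc b mb a ma h3 h1

theorem stmt_19 : ∃ C : ℝ, 0 < C ∧ ∀ k : ℕ, 2 ≤ k →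
    ¬ Arrows ⌈C * (1073 : ℝ) ^ ((k : ℝ) / 6)⌉₊ 2 k 3 := by
  refine ⟨1 / 33, by norm_num, fun k hk => ?_⟩
  -- `k = 3 m + j` with `1 ≤ j ≤ 3`; the loss from `j` is absorbed by `C = 1 / 33`.
  have hP := (sumFreePartition_pow ((k - 1) / 3)).mono (l := k) (by omega)
  refine hP.not_arrows (le_trans (Nat.ceil_le.2 ?_) (Nat.le_succ _))
  have h1 : (1073 : ℝ) ^ ((k : ℝ) / 6) ≤ 33 ^ ((k - 1) / 3 + 1) := by
    calc (1073 : ℝ) ^ ((k : ℝ) / 6) ≤ ((33 : ℝ) ^ (2 : ℝ)) ^ ((k : ℝ) / 6) := by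
          apply Real.rpow_le_rpow <;> first | positivity | norm_num
      _ = (33 : ℝ) ^ ((k : ℝ) / 3) := by
          rw [← Real.rpow_mul (by norm_num)]
          congr 1
          ring
      _ ≤ (33 : ℝ) ^ (((k - 1) / 3 + 1 : ℕ) : ℝ) := by
          apply Real.rpow_le_rpow_of_exponent_le (by norm_num)
          rw [div_le_iff₀ (by norm_num)]
          exact_mod_cast (by omega : k ≤ ((k - 1) / 3 + 1) * 3)
      _ = 33 ^ ((k - 1) / 3 + 1) := Real.rpow_natCast _ _
  rw [pow_succ] at h1
  push_cast
  linarith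
end
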